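/- arXiv:2001.00317 — 8 statements merged into one kernel-verified Lean document; each statement's English description precedes it below -/
import Mathlib

section
/- (Proposition 1.) Let N₀ be the smallest k-linear subspace of A containing X(i,0) for all i < n and closed under the operation ∘. Then N₀ equals the k-linear span of the set of all monomials u of A satisfying deg(u) − d(u) = 1. -/
open MvPolynomial

namespace NovikovAux

/-- degree of an exponent vector -/
def dg {n : ℕ} (m : (Fin n × ℕ) →₀ ℕ) : ℕ := m.sum fun _ e => e

/-- differential weight of an exponent vector -/
def dd {n : ℕ} (m : (Fin n × ℕ) →₀ ℕ) : ℕ := m.sum fun p e => p.2 * e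

lemma dg_add {n : ℕ} (a b : (Fin n × ℕ) →₀ ℕ) : dg (a + b) = dg a + dg b :=
  Finsupp.sum_add_index' (fun _ => rfl) (fun _ _ _ => rfl)

lemma dd_add {n : ℕ} (a b : (Fin n × ℕ) →₀ ℕ) : dd (a + b) = dd a + dd b :=
  Finsupp.sum_add_index' (fun _ => rfl) (fun _ _ _ => Nat.mul_add _ _ _)

lemma dg_single {n : ℕ} (p : Fin n × ℕ) : dg (Finsupp.single p 1) = 1 :=
  Finsupp.sum_single_index rfl

lemma dd_single {n : ℕ} (p : Fin n × ℕ) : dd (Finsupp.single p 1) = p.2 := by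
  unfold dd
  rw [Finsupp.sum_single_index] <;> simp

lemma split {n : ℕ} (m : (Fin n × ℕ) →₀ ℕ) (p : Fin n × ℕ) (hp : p ∈ m.support) :
    ∃ m', m = m' + Finsupp.single p 1 := by
  refine ⟨m - Finsupp.single p 1, (tsub_add_cancel_of_le ?_).symm⟩
  rw [Finsupp.single_le_iff]
  exact Nat.one_le_iff_ne_zero.mpr (Finsupp.mem_support_iff.mp hp)

lemma exists_zero_part {n : ℕ} (t : ℕ) : ∀ m : (Fin n × ℕ) →₀ ℕ, dd m + t ≤ dg m →
    ∃ m' z, m = m' + z ∧ dd z = 0 ∧ dg z = t := by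
  induction t with
  | zero => exact fun m _ => ⟨m, 0, by simp, by simp [dd], by simp [dg]⟩
  | succ t ih =>
    intro m hm
    have : ∃ p ∈ m.support, p.2 = 0 := by
      by_contra! h
      have : dg m ≤ dd m := by
        unfold dg dd Finsupp.sum
        apply Finset.sum_le_sum
        intro p hp
        exact Nat.le_mul_of_pos_left _ (Nat.pos_of_ne_zero (h p hp))
      omega
    obtain ⟨p, hp, h0⟩ := this
    obtain ⟨m1, rfl⟩ := split m p hp
    rw [dd_add, dg_add, dd_single, dg_single, h0] at hm
    obtain ⟨m', z, rfl, hz, hz'⟩ := ih m1 (by omega)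
    exact ⟨m', z + Finsupp.single p 1, by rw [add_assoc], by rw [dd_add, dd_single, hz, h0],
      by rw [dg_add, dg_single, hz']⟩

lemma mul_delta_mem {k : Type*} [Field k] {n : ℕ}
    (δ : Derivation k (MvPolynomial (Fin n × ℕ) k) (MvPolynomial (Fin n × ℕ) k))
    (hδ : ∀ (i : Fin n) (r : ℕ), δ (X (i, r)) = X (i, r + 1))
    (W : Submodule k (MvPolynomial (Fin n × ℕ) k)) (c m : (Fin n × ℕ) →₀ ℕ)
    (h : ∀ m' i r, m = m' + Finsupp.single (i, r) 1 →
      monomial (c + m' + Finsupp.single (i, r + 1) 1) (1 : k) ∈ W) :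
    monomial c (1 : k) * δ (monomial m 1) ∈ W := by
  have e : δ = mkDerivation k (fun p : Fin n × ℕ => X (p.1, p.2 + 1)) := by
    apply MvPolynomial.derivation_ext
    rintro ⟨i, r⟩
    rw [hδ, mkDerivation_X]
  rw [e, mkDerivation_monomial, one_smul, Finsupp.sum, Finset.mul_sum]
  apply Submodule.sum_mem
  rintro ⟨i, r⟩ hp
  have hm := h (m - Finsupp.single (i, r) 1) i r (by
    refine (tsub_add_cancel_of_le ?_).symm
    rw [Finsupp.single_le_iff]
    exact Nat.one_le_iff_ne_zero.mpr (Finsupp.mem_support_iff.mp hp))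
  have := W.smul_mem (m (i, r) : k) hm
  convert this using 1
  rw [smul_eq_mul, X, monomial_mul, monomial_mul, smul_monomial]
  simp [add_assoc]

lemma mem_of_closed {k : Type*} [Field k] {n : ℕ}
    (δ : Derivation k (MvPolynomial (Fin n × ℕ) k) (MvPolynomial (Fin n × ℕ) k))
    (hδ : ∀ (i : Fin n) (r : ℕ), δ (X (i, r)) = X (i, r + 1))
    (W : Submodule k (MvPolynomial (Fin n × ℕ) k))
    (hX : ∀ i : Fin n, X (i, (0 : ℕ)) ∈ W) (hW : ∀ a ∈ W, ∀ b ∈ W, a * δ b ∈ W) (N : ℕ) :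
    ∀ m : (Fin n × ℕ) →₀ ℕ, dg m = N → dg m = dd m + 1 → monomial m (1 : k) ∈ W := by
  induction N using Nat.strong_induction_on with
  | _ N ih =>
  intro m hN hm
  by_cases hex : ∃ p ∈ m.support, p.2 ≠ 0
  · obtain ⟨⟨i, r⟩, hp, hr⟩ := hex
    obtain ⟨t, rfl⟩ : ∃ t, r = t + 1 := Nat.exists_eq_succ_of_ne_zero hr
    obtain ⟨m0, rfl⟩ := split m _ hp
    rw [dg_add, dg_single] at hN
    rw [dg_add, dd_add, dg_single, dd_single] at hm
    dsimp only at hm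
    obtain ⟨u, z, rfl, hz, hzt⟩ := exists_zero_part t m0 (by omega)
    rw [dg_add] at hN
    rw [dg_add, dd_add] at hm
    have hu : monomial u (1 : k) ∈ W := ih (dg u) (by omega) u rfl (by omega)
    have hw : monomial (z + Finsupp.single (i, t) 1) (1 : k) ∈ W := by
      refine ih _ ?_ _ rfl ?_
      · rw [dg_add, dg_single]; omega
      · rw [dg_add, dg_single, dd_add, dd_single]; dsimp only; omega
    have h1 := hW _ hu _ hw
    have h2 : monomial (u + Finsupp.single (i, t) 1) (1 : k) * δ (monomial z 1) ∈ W := by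
      apply mul_delta_mem δ hδ
      rintro z' j s rfl
      rw [dd_add, dd_single] at hz
      rw [dg_add, dg_single] at hzt hN hm
      rw [dd_add, dd_single] at hm
      dsimp only at hz hm
      have hs : s = 0 := by omega
      subst hs
      have h3 : monomial (u + Finsupp.single (i, t) 1 + z') (1 : k) ∈ W := by
        refine ih _ ?_ _ rfl ?_
        · rw [dg_add, dg_add, dg_single]; omega
        · rw [dg_add, dg_add, dg_single, dd_add, dd_add, dd_single]; dsimp only; omega
      have h4 := hW _ h3 _ (hX j)
      rw [hδ, X, monomial_mul, one_mul] at h4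
      exact h4
    have h5 := W.sub_mem h1 h2
    convert h5 using 1
    have e1 : monomial (z + Finsupp.single (i, t) 1) (1 : k) = monomial z 1 * X (i, t) := by
      rw [X, monomial_mul, one_mul]
    have e2 : monomial (u + Finsupp.single (i, t) 1) (1 : k) = monomial u 1 * X (i, t) := by
      rw [X, monomial_mul, one_mul]
    have e3 : monomial (u + z + Finsupp.single (i, t + 1) 1) (1 : k)
        = monomial u 1 * monomial z 1 * X (i, t + 1) := by
      rw [X, monomial_mul, monomial_mul, one_mul, one_mul]
    rw [e1, e2, e3, Derivation.leibniz, hδ, smul_eq_mul, smul_eq_mul]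
    ring
  · push Not at hex
    have hd : dd m = 0 := by
      unfold dd Finsupp.sum
      exact Finset.sum_eq_zero fun p hp => by dsimp only; rw [hex p hp, zero_mul]
    have hne : m.support.Nonempty := by
      rw [Finset.nonempty_iff_ne_empty]
      intro h
      rw [Finsupp.support_eq_empty] at h
      subst h
      simp [dg] at hm
    obtain ⟨⟨i, r⟩, hp⟩ := hne
    have hr : r = 0 := hex _ hp
    subst hr
    obtain ⟨m0, rfl⟩ := split m _ hp
    rw [hd, dg_add, dg_single] at hm
    have h0 : dg m0 = 0 := by omega
    have : m0 = 0 := by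
      ext p
      by_contra h
      obtain ⟨m1, rfl⟩ := split m0 p (Finsupp.mem_support_iff.mpr h)
      rw [dg_add, dg_single] at h0
      omega
    rw [this, zero_add]
    exact hX i

end NovikovAux

/-- Proposition 1: the smallest `k`-subspace of `A = k[X(i,r)]` containing the `X(i,0)` and
closed under `f ∘ g := f * δ g` equals the span of the monomials `u` with
`deg u - d u = 1`. -/
theorem free_novikov_basis (k : Type*) [Field k] [CharZero k] (n : ℕ) (hn : 0 < n)
    (δ : Derivation k (MvPolynomial (Fin n × ℕ) k) (MvPolynomial (Fin n × ℕ) k))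
    (hδ : ∀ (i : Fin n) (r : ℕ), δ (X (i, r)) = X (i, r + 1)) :
    sInf {p : Submodule k (MvPolynomial (Fin n × ℕ) k) |
        (∀ i : Fin n, X (i, (0 : ℕ)) ∈ p) ∧ ∀ a ∈ p, ∀ b ∈ p, a * δ b ∈ p} =
      Submodule.span k {u : MvPolynomial (Fin n × ℕ) k |
        ∃ m : (Fin n × ℕ) →₀ ℕ, u = monomial m 1 ∧
          (m.sum fun _ e => e) = (m.sum fun p e => p.2 * e) + 1} := by
  apply le_antisymm
  · apply sInf_le
    refine ⟨fun i => Submodule.subset_span ⟨Finsupp.single (i, 0) 1, rfl, ?_⟩, ?_⟩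
    · change NovikovAux.dg _ = NovikovAux.dd _ + 1
      rw [NovikovAux.dg_single, NovikovAux.dd_single]
    · intro a ha b hb
      induction ha using Submodule.span_induction with
      | zero => rw [zero_mul]; exact Submodule.zero_mem _
      | add x y _ _ hx hy => rw [add_mul]; exact Submodule.add_mem _ hx hy
      | smul c x _ hx => rw [smul_mul_assoc]; exact Submodule.smul_mem _ c hx
      | mem a ha =>
        obtain ⟨c, rfl, hc⟩ := ha
        induction hb using Submodule.span_induction with
        | zero => rw [map_zero, mul_zero]; exact Submodule.zero_mem _
        | add x y _ _ hx hy => rw [map_add, mul_add]; exact Submodule.add_mem _ hx hy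
        | smul c x _ hx =>
          rw [Derivation.map_smul, mul_smul_comm]; exact Submodule.smul_mem _ c hx
        | mem b hb =>
          obtain ⟨m, rfl, hm⟩ := hb
          apply NovikovAux.mul_delta_mem δ hδ
          rintro m' i r rfl
          refine Submodule.subset_span ⟨_, rfl, ?_⟩
          change NovikovAux.dg _ = NovikovAux.dd _ + 1 at hm hc
          change NovikovAux.dg _ = NovikovAux.dd _ + 1
          simp only [NovikovAux.dg_add, NovikovAux.dd_add, NovikovAux.dg_single,
            NovikovAux.dd_single] at hm ⊢
          omega
  · rw [Submodule.span_le]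
    rintro _ ⟨m, rfl, hm⟩
    rw [SetLike.mem_coe, Submodule.mem_sInf]
    rintro W ⟨hX, hW⟩
    exact NovikovAux.mem_of_closed δ hδ W hX hW _ m rfl hm
end

section
/- If u and v are monomials of A with deg(u) − d(u) = 1 and deg(v) − d(v) = 1, then u ∘ v = u · δ(v) lies in the k-linear span of the set of all monomials w of A satisfying deg(w) − d(w) = 1. Consequently this span is closed under the operation ∘. -/
open MvPolynomial

/-- The total degree of an exponent function. -/
def novDeg {n : ℕ} (m : (Fin n × ℕ) →₀ ℕ) : ℕ := m.sum fun _ e => e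

/-- The differential weight of an exponent function. -/
def novWt {n : ℕ} (m : (Fin n × ℕ) →₀ ℕ) : ℕ := m.sum fun p e => p.2 * e

lemma novDeg_add {n : ℕ} (a b : (Fin n × ℕ) →₀ ℕ) : novDeg (a + b) = novDeg a + novDeg b :=
  Finsupp.sum_add_index' (fun _ => rfl) (fun _ _ _ => rfl)

lemma novWt_add {n : ℕ} (a b : (Fin n × ℕ) →₀ ℕ) : novWt (a + b) = novWt a + novWt b :=
  Finsupp.sum_add_index' (fun _ => by simp) (fun _ _ _ => by ring)

/-- The span of the monomials of degree `a` and weight `b`. -/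
noncomputable def novSpan (k : Type*) [Field k] (n : ℕ) (a b : ℕ) :
    Submodule k (MvPolynomial (Fin n × ℕ) k) :=
  Submodule.span k {u | ∃ m : (Fin n × ℕ) →₀ ℕ, u = monomial m 1 ∧ novDeg m = a ∧ novWt m = b}

lemma monomial_mul_mem_novSpan {k : Type*} [Field k] {n : ℕ} (m : (Fin n × ℕ) →₀ ℕ) {a b : ℕ}
    {f : MvPolynomial (Fin n × ℕ) k} (hf : f ∈ novSpan k n a b) :
    monomial m (1 : k) * f ∈ novSpan k n (novDeg m + a) (novWt m + b) := by
  unfold novSpan at hf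
  induction hf using Submodule.span_induction with
  | mem x hx =>
    obtain ⟨m', rfl, h1, h2⟩ := hx
    refine Submodule.subset_span ⟨m + m', by simp [monomial_mul], ?_, ?_⟩
    · rw [novDeg_add, h1]
    · rw [novWt_add, h2]
  | zero => simp
  | add x y _ _ hx hy => rw [mul_add]; exact Submodule.add_mem _ hx hy
  | smul c x _ hx => rw [mul_smul_comm]; exact Submodule.smul_mem _ c hx

lemma deriv_monomial_mem_novSpan {k : Type*} [Field k] {n : ℕ}
    (δ : Derivation k (MvPolynomial (Fin n × ℕ) k) (MvPolynomial (Fin n × ℕ) k))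
    (hδ : ∀ (i : Fin n) (r : ℕ), δ (X (i, r)) = X (i, r + 1)) (m : (Fin n × ℕ) →₀ ℕ) :
    δ (monomial m (1 : k)) ∈ novSpan k n (novDeg m) (novWt m + 1) := by
  have hzero : δ (monomial 0 (1 : k)) ∈ novSpan k n (novDeg (n := n) 0) (novWt (n := n) 0 + 1) := by
    have : (monomial 0 (1 : k) : MvPolynomial (Fin n × ℕ) k) = 1 := rfl
    rw [this, Derivation.map_one_eq_zero]
    exact Submodule.zero_mem _
  have hadd : ∀ a b : (Fin n × ℕ) →₀ ℕ,
      δ (monomial a (1 : k)) ∈ novSpan k n (novDeg a) (novWt a + 1) →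
      δ (monomial b (1 : k)) ∈ novSpan k n (novDeg b) (novWt b + 1) →
      δ (monomial (a + b) (1 : k)) ∈ novSpan k n (novDeg (a + b)) (novWt (a + b) + 1) := by
    intro a b ha hb
    have : (monomial (a + b) (1 : k)) = monomial a 1 * monomial b 1 := by simp [monomial_mul]
    rw [this, Derivation.leibniz, smul_eq_mul, smul_eq_mul, novDeg_add, novWt_add]
    refine Submodule.add_mem _ ?_ ?_
    · have := monomial_mul_mem_novSpan a hb
      rwa [← add_assoc] at this
    · have := monomial_mul_mem_novSpan b ha
      rwa [← add_assoc, add_comm (novDeg b), add_comm (novWt b)] at this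
  induction m using Finsupp.induction_linear with
  | zero => exact hzero
  | add a b ha hb => exact hadd a b ha hb
  | single p e =>
    induction e with
    | zero => rw [Finsupp.single_zero]; exact hzero
    | succ e ih =>
      rw [Finsupp.single_add]
      refine hadd _ _ ih ?_
      obtain ⟨i, r⟩ := p
      have : δ (monomial (Finsupp.single (i, r) 1) (1 : k)) = X (i, r + 1) := hδ i r
      rw [this]
      refine Submodule.subset_span ⟨Finsupp.single (i, r + 1) 1, rfl, ?_, ?_⟩
      · simp [novDeg]
      · simp [novWt]

/-- If `u, v` are monomials with `deg - d = 1`, then `u ∘ v = u * δ v` lies in the span of the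
monomials with `deg - d = 1`; consequently this span is closed under `∘`. -/
theorem novikov_span_closed (k : Type*) [Field k] [CharZero k] (n : ℕ) (hn : 0 < n)
    (δ : Derivation k (MvPolynomial (Fin n × ℕ) k) (MvPolynomial (Fin n × ℕ) k))
    (hδ : ∀ (i : Fin n) (r : ℕ), δ (X (i, r)) = X (i, r + 1)) :
    (∀ mu mv : (Fin n × ℕ) →₀ ℕ,
      (mu.sum fun _ e => e) = (mu.sum fun p e => p.2 * e) + 1 →
      (mv.sum fun _ e => e) = (mv.sum fun p e => p.2 * e) + 1 →
      (monomial mu (1 : k)) * δ (monomial mv (1 : k)) ∈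
        Submodule.span k {u : MvPolynomial (Fin n × ℕ) k |
          ∃ m : (Fin n × ℕ) →₀ ℕ, u = monomial m 1 ∧
            (m.sum fun _ e => e) = (m.sum fun p e => p.2 * e) + 1}) ∧
    (∀ f g : MvPolynomial (Fin n × ℕ) k,
      f ∈ Submodule.span k {u : MvPolynomial (Fin n × ℕ) k |
          ∃ m : (Fin n × ℕ) →₀ ℕ, u = monomial m 1 ∧
            (m.sum fun _ e => e) = (m.sum fun p e => p.2 * e) + 1} →
      g ∈ Submodule.span k {u : MvPolynomial (Fin n × ℕ) k |
          ∃ m : (Fin n × ℕ) →₀ ℕ, u = monomial m 1 ∧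
            (m.sum fun _ e => e) = (m.sum fun p e => p.2 * e) + 1} →
      f * δ g ∈ Submodule.span k {u : MvPolynomial (Fin n × ℕ) k |
          ∃ m : (Fin n × ℕ) →₀ ℕ, u = monomial m 1 ∧
            (m.sum fun _ e => e) = (m.sum fun p e => p.2 * e) + 1}) := by
  have key : ∀ mu mv : (Fin n × ℕ) →₀ ℕ,
      (mu.sum fun _ e => e) = (mu.sum fun p e => p.2 * e) + 1 →
      (mv.sum fun _ e => e) = (mv.sum fun p e => p.2 * e) + 1 →
      (monomial mu (1 : k)) * δ (monomial mv (1 : k)) ∈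
        Submodule.span k {u : MvPolynomial (Fin n × ℕ) k |
          ∃ m : (Fin n × ℕ) →₀ ℕ, u = monomial m 1 ∧
            (m.sum fun _ e => e) = (m.sum fun p e => p.2 * e) + 1} := by
    intro mu mv hu hv
    change novDeg mu = novWt mu + 1 at hu
    change novDeg mv = novWt mv + 1 at hv
    refine Submodule.span_mono ?_
      (monomial_mul_mem_novSpan mu (deriv_monomial_mem_novSpan δ hδ mv))
    rintro _ ⟨m, rfl, h1, h2⟩
    refine ⟨m, rfl, ?_⟩
    change novDeg m = novWt m + 1
    omega
  refine ⟨key, fun f g hf hg => ?_⟩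
  induction hf using Submodule.span_induction with
  | zero => rw [zero_mul]; exact Submodule.zero_mem _
  | add x y _ _ hx hy => rw [add_mul]; exact Submodule.add_mem _ hx hy
  | smul c x _ hx => rw [smul_mul_assoc]; exact Submodule.smul_mem _ c hx
  | mem x hx =>
    obtain ⟨mu, rfl, hu⟩ := hx
    induction hg using Submodule.span_induction with
    | zero => rw [map_zero, mul_zero]; exact Submodule.zero_mem _
    | add x y _ _ hx hy => rw [map_add, mul_add]; exact Submodule.add_mem _ hx hy
    | smul c x _ hx =>
      rw [Derivation.map_smul, mul_smul_comm]; exact Submodule.smul_mem _ c hx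
    | mem y hy =>
      obtain ⟨mv, rfl, hv⟩ := hy
      exact key mu mv hu hv
end

section
/- Every monomial u of A with deg(u) − d(u) = 1 belongs to the smallest k-linear subspace of A containing X(i,0) for all i < n and closed under the operation ∘. -/
open MvPolynomial

lemma novikov_aux_delta {k : Type*} [Field k] {n : ℕ}
    (δ : Derivation k (MvPolynomial (Fin n × ℕ) k) (MvPolynomial (Fin n × ℕ) k))
    (hδ : ∀ (i : Fin n) (r : ℕ), δ (X (i, r)) = X (i, r + 1))
    (p : Submodule k (MvPolynomial (Fin n × ℕ) k)) (Z : Multiset (Fin n × ℕ)) :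
    ∀ (a : MvPolynomial (Fin n × ℕ) k), (∀ z ∈ Z, z.2 = 0) →
      (∀ (i : Fin n) (Z' : Multiset (Fin n × ℕ)), Z = (i, 0) ::ₘ Z' →
        a * (Z'.map X).prod * X (i, 1) ∈ p) →
      a * δ ((Z.map X).prod) ∈ p := by
  induction Z using Multiset.induction_on with
  | empty => intro a _ _; simp
  | cons z Z ih =>
    intro a h0 h
    obtain ⟨i, r⟩ := z
    have hr : r = 0 := h0 (i, r) (by simp)
    subst hr
    have h1 := h i Z rfl
    have h2 := ih (a * X (i, 0)) (fun z hz => h0 z (by simp [hz])) (by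
      intro i' Z' hZ
      have := h i' ((i, 0) ::ₘ Z') (by rw [hZ, Multiset.cons_swap])
      simp only [Multiset.map_cons, Multiset.prod_cons] at this
      convert this using 1
      ring)
    have := p.add_mem h1 h2
    simp only [Multiset.map_cons, Multiset.prod_cons, Derivation.leibniz, hδ, smul_eq_mul]
    convert this using 1
    ring

lemma novikov_aux_card {n : ℕ} (s : Multiset (Fin n × ℕ)) :
    s.card ≤ (s.filter (fun z => z.2 = 0)).card + (s.map Prod.snd).sum := by
  induction s using Multiset.induction_on with
  | empty => simp
  | cons z Z ih =>
    by_cases hz : z.2 = 0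
    · rw [Multiset.filter_cons_of_pos (p := fun z : Fin n × ℕ => z.2 = 0) Z hz]; simp; omega
    · rw [Multiset.filter_cons_of_neg (p := fun z : Fin n × ℕ => z.2 = 0) Z hz]; simp; omega

lemma novikov_aux_le {α : Type*} {s : Multiset α} {n : ℕ} (h : n ≤ s.card) :
    ∃ t ≤ s, t.card = n := by
  induction s using Quotient.inductionOn with
  | _ l =>
    exact ⟨(l.take n : List α), (List.take_sublist n l).subperm, by simpa using h⟩

lemma novikov_aux_main {k : Type*} [Field k] {n : ℕ}
    (δ : Derivation k (MvPolynomial (Fin n × ℕ) k) (MvPolynomial (Fin n × ℕ) k))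
    (hδ : ∀ (i : Fin n) (r : ℕ), δ (X (i, r)) = X (i, r + 1))
    (p : Submodule k (MvPolynomial (Fin n × ℕ) k))
    (hX : ∀ i : Fin n, X (i, (0 : ℕ)) ∈ p) (hp : ∀ a ∈ p, ∀ b ∈ p, a * δ b ∈ p) (N : ℕ) :
    ∀ s : Multiset (Fin n × ℕ), s.card = N → s.card = (s.map Prod.snd).sum + 1 →
      (s.map X).prod ∈ p := by
  induction N using Nat.strong_induction_on with
  | _ N ih =>
  intro s hN hs
  -- any multiset of smaller size with a first-order factor added
  have key : ∀ (i : Fin n) (t : Multiset (Fin n × ℕ)), t.card < N →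
      t.card = (t.map Prod.snd).sum + 1 → (t.map X).prod * X (i, 1) ∈ p := by
    intro i t h1 h2
    have := hp _ (ih _ h1 t rfl h2) _ (hX i)
    rwa [hδ] at this
  by_cases h2 : ∃ j r, (j, r + 2) ∈ s
  · obtain ⟨j, r, hj⟩ := h2
    obtain ⟨s', rfl⟩ := Multiset.exists_cons_of_mem hj
    have hc := novikov_aux_card s'
    simp only [Multiset.card_cons, Multiset.map_cons, Multiset.sum_cons] at hs hN
    obtain ⟨T, hT, hTc⟩ := novikov_aux_le
      (s := s'.filter (fun z => z.2 = 0)) (n := r + 1) (by omega)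
    have hT0 : ∀ z ∈ T, z.2 = 0 := fun z hz =>
      (Multiset.mem_filter.1 (Multiset.mem_of_le hT hz)).2
    have hTs : (T.map Prod.snd).sum = 0 := by
      apply Multiset.sum_eq_zero
      intro x hx
      obtain ⟨z, hz, rfl⟩ := Multiset.mem_map.1 hx
      exact hT0 z hz
    obtain ⟨W, rfl⟩ := Multiset.le_iff_exists_add.1 (hT.trans (Multiset.filter_le _ _))
    simp only [Multiset.card_add, Multiset.map_add, Multiset.sum_add] at hs hN
    have hW := ih W.card (by omega) W rfl (by omega)
    have hv := ih (r + 2) (by omega) ((j, r + 1) ::ₘ T) (by simp [hTc]) (by simp [hTc, hTs])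
    have h3 := hp _ hW _ hv
    have h4 := novikov_aux_delta δ hδ p T ((W.map X).prod * X (j, r + 1)) hT0 (by
      intro i Z' hZ
      subst hZ
      simp only [Multiset.card_cons, Multiset.map_cons, Multiset.sum_cons] at hTc hTs hs hN
      have := key i (W + (j, r + 1) ::ₘ Z') 
        (by simp only [Multiset.card_add, Multiset.card_cons]; omega)
        (by simp only [Multiset.card_add, Multiset.card_cons, Multiset.map_add,
              Multiset.map_cons, Multiset.sum_add, Multiset.sum_cons]; omega)
      simp only [Multiset.map_add, Multiset.map_cons, Multiset.prod_add,
        Multiset.prod_cons] at this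
      convert this using 1
      ring)
    have h5 := p.sub_mem h3 h4
    simp only [Multiset.map_cons, Multiset.prod_cons, Multiset.map_add, Multiset.prod_add,
      Derivation.leibniz, hδ, smul_eq_mul] at h5 ⊢
    convert h5 using 1
    ring
  by_cases h1 : ∃ i, (i, 1) ∈ s
  · obtain ⟨i, hi⟩ := h1
    obtain ⟨s', rfl⟩ := Multiset.exists_cons_of_mem hi
    simp only [Multiset.card_cons, Multiset.map_cons, Multiset.sum_cons] at hs hN
    have := key i s' (by omega) (by omega)
    simpa [mul_comm] using this
  have h0 : ∀ z ∈ s, z.2 = 0 := by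
    rintro ⟨i, r⟩ hz
    match r, hz with
    | 0, _ => rfl
    | 1, hz => exact absurd ⟨i, hz⟩ h1
    | r + 2, hz => exact absurd ⟨i, r, hz⟩ h2
  have hs0 : (s.map Prod.snd).sum = 0 := by
    apply Multiset.sum_eq_zero
    intro x hx
    obtain ⟨z, hz, rfl⟩ := Multiset.mem_map.1 hx
    exact h0 z hz
  obtain ⟨⟨i, r⟩, rfl⟩ := Multiset.card_eq_one.1 (by omega : s.card = 1)
  have : r = 0 := h0 (i, r) (by simp)
  subst this
  simpa using hX i

/-- Every monomial `u` with `deg u - d u = 1` belongs to the smallest `k`-subspace of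
`A = k[X(i,r)]` containing the `X(i,0)` and closed under `f ∘ g := f * δ g`. -/
theorem monomial_mem_novikov (k : Type*) [Field k] [CharZero k] (n : ℕ) (hn : 0 < n)
    (δ : Derivation k (MvPolynomial (Fin n × ℕ) k) (MvPolynomial (Fin n × ℕ) k))
    (hδ : ∀ (i : Fin n) (r : ℕ), δ (X (i, r)) = X (i, r + 1))
    (m : (Fin n × ℕ) →₀ ℕ)
    (hm : (m.sum fun _ e => e) = (m.sum fun p e => p.2 * e) + 1) :
    (monomial m (1 : k)) ∈
      sInf {p : Submodule k (MvPolynomial (Fin n × ℕ) k) |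
        (∀ i : Fin n, X (i, (0 : ℕ)) ∈ p) ∧ ∀ a ∈ p, ∀ b ∈ p, a * δ b ∈ p} := by
  rw [Submodule.mem_sInf]
  rintro p ⟨hX, hp⟩
  have := novikov_aux_main δ hδ p hX hp _ (Finsupp.toMultiset m) rfl (by
    have e : ((Finsupp.toMultiset m).map Prod.snd).sum = m.sum fun p e => p.2 * e := by
      clear hm
      induction m using Finsupp.induction_linear with
      | zero => simp
      | add f g hf hg =>
        rw [Finsupp.sum_add_index' (by simp) (by intros; ring)]
        simp [hf, hg]
      | single a b => simp [Finsupp.toMultiset_single, Multiset.map_nsmul, Multiset.sum_nsmul, mul_comm]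
    rw [Finsupp.card_toMultiset, e]
    exact hm)
  have e2 : ((Finsupp.toMultiset m).map (X : _ → MvPolynomial (Fin n × ℕ) k)).prod
      = monomial m (1 : k) := by
    rw [monomial_eq, Finsupp.toMultiset_map, Finsupp.prod_toMultiset,
      Finsupp.prod_mapDomain_index (by simp) (by intros; rw [pow_add])]
    simp
  rwa [e2] at this
end

section
/- The derivation D₁ of A defined by D₁(f) = (1/2)·δ²(w)·∂₁(f) satisfies D₁(w) = 0 and D₁(δ²(w)) = 0. -/
open MvPolynomial

/-- The derivation `D₁ = (1/2)·δ²(w) • ∂₁` satisfies `D₁ w = 0` and `D₁ (δ² w) = 0`. -/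
theorem D1_w_eq_zero (k : Type*) [Field k] [CharZero k]
    (δ d1 D1 : Derivation k (MvPolynomial (Fin 3 × ℕ) k) (MvPolynomial (Fin 3 × ℕ) k))
    (hδ : ∀ (i : Fin 3) (r : ℕ), δ (X (i, r)) = X (i, r + 1))
    (hd1x : ∀ r : ℕ, d1 (X ((0 : Fin 3), r)) = 2 * X ((1 : Fin 3), r))
    (hd1y : ∀ r : ℕ, d1 (X ((1 : Fin 3), r)) = X ((2 : Fin 3), r))
    (hd1z : ∀ r : ℕ, d1 (X ((2 : Fin 3), r)) = 0)
    (w : MvPolynomial (Fin 3 × ℕ) k)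
    (hw : w = X ((1 : Fin 3), (0 : ℕ)) ^ 2 - X ((0 : Fin 3), (0 : ℕ)) * X ((2 : Fin 3), (0 : ℕ)))
    (hD1 : ∀ f : MvPolynomial (Fin 3 × ℕ) k, D1 f = C ((2 : k)⁻¹) * δ (δ w) * d1 f) :
    D1 w = 0 ∧ D1 (δ (δ w)) = 0 := by
  have h1 : d1 w = 0 := by
    rw [hw, pow_two]
    simp only [map_sub, map_add, Derivation.leibniz, smul_eq_mul, hd1x, hd1y, hd1z]
    ring
  have h2 : d1 (δ (δ w)) = 0 := by
    rw [hw, pow_two]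
    simp only [map_sub, map_add, Derivation.leibniz, smul_eq_mul, hδ, hd1x, hd1y, hd1z]
    ring
  exact ⟨by rw [hD1, h1, mul_zero], by rw [hD1, h2, mul_zero]⟩
end

section
/- Set w₀ = (1/2)·(2·(y ∘ y) − x ∘ z − z ∘ x), where f ∘ g := f · δ(g). Then D₁(w₀) = 0. -/
open MvPolynomial

/-- With `w₀ = (1/2)(2(y∘y) - x∘z - z∘x)` (where `f ∘ g = f·δ g`) one has `D₁ w₀ = 0`. -/
theorem D1_w0_eq_zero (k : Type*) [Field k] [CharZero k]
    (δ d1 D1 : Derivation k (MvPolynomial (Fin 3 × ℕ) k) (MvPolynomial (Fin 3 × ℕ) k))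
    (hδ : ∀ (i : Fin 3) (r : ℕ), δ (X (i, r)) = X (i, r + 1))
    (hd1x : ∀ r : ℕ, d1 (X ((0 : Fin 3), r)) = 2 * X ((1 : Fin 3), r))
    (hd1y : ∀ r : ℕ, d1 (X ((1 : Fin 3), r)) = X ((2 : Fin 3), r))
    (hd1z : ∀ r : ℕ, d1 (X ((2 : Fin 3), r)) = 0)
    (w : MvPolynomial (Fin 3 × ℕ) k)
    (hw : w = X ((1 : Fin 3), (0 : ℕ)) ^ 2 - X ((0 : Fin 3), (0 : ℕ)) * X ((2 : Fin 3), (0 : ℕ)))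
    (hD1 : ∀ f : MvPolynomial (Fin 3 × ℕ) k, D1 f = C ((2 : k)⁻¹) * δ (δ w) * d1 f)
    (w0 : MvPolynomial (Fin 3 × ℕ) k)
    (hw0 : w0 = C ((2 : k)⁻¹) *
      (2 * (X ((1 : Fin 3), (0 : ℕ)) * δ (X ((1 : Fin 3), (0 : ℕ)))) -
        X ((0 : Fin 3), (0 : ℕ)) * δ (X ((2 : Fin 3), (0 : ℕ))) -
        X ((2 : Fin 3), (0 : ℕ)) * δ (X ((0 : Fin 3), (0 : ℕ))))) :
    D1 w0 = 0 := by
  rw [hD1, hw0, two_mul]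
  simp only [hδ, Derivation.leibniz, map_add, map_sub, hd1x, hd1y, hd1z, smul_eq_mul,
    MvPolynomial.derivation_C]
  ring
end

section
/- The derivation D = w • ∂ of B (i.e. D(f) = w·∂(f)) satisfies D(x) = 2yw, D²(x) = 2zw², D³(x) = 0, D(y) = zw, D²(y) = 0, D(z) = 0, and D is locally nilpotent: for every f ∈ B there exists m ∈ ℕ with D^m(f) = 0. -/
open MvPolynomial

theorem aux_iter_add {k B : Type*} [CommRing k] [CommRing B] [Algebra k B] (D : Derivation k B B)
    (n : ℕ) : ∀ f g : B, (⇑D)^[n] (f + g) = (⇑D)^[n] f + (⇑D)^[n] g := by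
  induction n with
  | zero => intro f g; rfl
  | succ n ih => intro f g; simp only [Function.iterate_succ_apply, map_add, ih]

theorem aux_iter_zero {k B : Type*} [CommRing k] [CommRing B] [Algebra k B] (D : Derivation k B B)
    (n : ℕ) : (⇑D)^[n] 0 = 0 := by
  induction n with
  | zero => rfl
  | succ n ih => simp only [Function.iterate_succ_apply, map_zero, ih]

theorem aux_iter_mul {k B : Type*} [CommRing k] [CommRing B] [Algebra k B] (D : Derivation k B B)
    (n : ℕ) : ∀ (a b : ℕ) (f g : B), a + b = n → (⇑D)^[a] f = 0 → (⇑D)^[b] g = 0 →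
      (⇑D)^[n] (f * g) = 0 := by
  induction n with
  | zero =>
    intro a b f g h hf hg
    obtain rfl : a = 0 := by omega
    have : f = 0 := hf
    simp [this]
  | succ n ih =>
    intro a b f g h hf hg
    rcases a with _ | a
    · have : f = 0 := hf
      rw [this, zero_mul, aux_iter_zero]
    rcases b with _ | b
    · have : g = 0 := hg
      rw [this, mul_zero, aux_iter_zero]
    rw [Function.iterate_succ_apply, D.leibniz, smul_eq_mul, smul_eq_mul, aux_iter_add,
      ih (a + 1) b f (D g) (by omega) hf (by rwa [Function.iterate_succ_apply] at hg),
      ih (b + 1) a g (D f) (by omega) hg (by rwa [Function.iterate_succ_apply] at hf), add_zero]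

/-- The triangular derivation `D = w • ∂` of `k[x,y,z]` satisfies the listed identities and is
locally nilpotent. -/
theorem D_locally_nilpotent_poly (k : Type*) [Field k] [CharZero k]
    (d D : Derivation k (MvPolynomial (Fin 3) k) (MvPolynomial (Fin 3) k))
    (hdx : d (X (0 : Fin 3)) = 2 * X (1 : Fin 3))
    (hdy : d (X (1 : Fin 3)) = X (2 : Fin 3))
    (hdz : d (X (2 : Fin 3)) = 0)
    (w : MvPolynomial (Fin 3) k)
    (hw : w = X (1 : Fin 3) ^ 2 - X (0 : Fin 3) * X (2 : Fin 3))
    (hD : ∀ f : MvPolynomial (Fin 3) k, D f = w * d f) :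
    D (X (0 : Fin 3)) = 2 * X (1 : Fin 3) * w ∧
    D (D (X (0 : Fin 3))) = 2 * X (2 : Fin 3) * w ^ 2 ∧
    D (D (D (X (0 : Fin 3)))) = 0 ∧
    D (X (1 : Fin 3)) = X (2 : Fin 3) * w ∧
    D (D (X (1 : Fin 3))) = 0 ∧
    D (X (2 : Fin 3)) = 0 ∧
    ∀ f : MvPolynomial (Fin 3) k, ∃ m : ℕ, (⇑D)^[m] f = 0 := by
  have hd2 : d 2 = 0 := by simpa using d.map_natCast 2
  have hdw : d w = 0 := by
    rw [hw, map_sub, pow_two, d.leibniz, d.leibniz, hdx, hdy, hdz]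
    simp only [smul_eq_mul]
    ring
  have hx1 : D (X (0 : Fin 3)) = 2 * X (1 : Fin 3) * w := by rw [hD, hdx]; ring
  have hx2 : D (D (X (0 : Fin 3))) = 2 * X (2 : Fin 3) * w ^ 2 := by
    rw [hx1, hD, d.leibniz, d.leibniz, hdw, hd2, hdy]
    simp only [smul_eq_mul]
    ring
  have hx3 : D (D (D (X (0 : Fin 3)))) = 0 := by
    rw [hx2, hD, pow_two, d.leibniz, d.leibniz, d.leibniz, hdw, hd2, hdz]
    simp
  have hy1 : D (X (1 : Fin 3)) = X (2 : Fin 3) * w := by rw [hD, hdy]; ring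
  have hy2 : D (D (X (1 : Fin 3))) = 0 := by
    rw [hy1, hD, d.leibniz, hdw, hdz]
    simp
  have hz : D (X (2 : Fin 3)) = 0 := by rw [hD, hdz, mul_zero]
  refine ⟨hx1, hx2, hx3, hy1, hy2, hz, fun f => ?_⟩
  induction f using MvPolynomial.induction_on with
  | C a => exact ⟨1, D.map_algebraMap a⟩
  | add p q hp hq =>
    obtain ⟨a, ha⟩ := hp
    obtain ⟨b, hb⟩ := hq
    refine ⟨a + b, ?_⟩
    rw [aux_iter_add, add_comm a b, Function.iterate_add_apply, ha, add_comm b a,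
      Function.iterate_add_apply, hb, aux_iter_zero, aux_iter_zero, add_zero]
  | mul_X p i hp =>
    obtain ⟨a, ha⟩ := hp
    have hX : (⇑D)^[3] (X i) = 0 := by
      change D (D (D (X i))) = 0
      fin_cases i
      · exact hx3
      · change D (D (D (X (1 : Fin 3)))) = 0
        rw [hy2, map_zero]
      · change D (D (D (X (2 : Fin 3)))) = 0
        rw [hz, map_zero, map_zero]
    exact ⟨a + 3, aux_iter_mul D _ a 3 p (X i) rfl ha hX⟩
end

section
/- There exists a k-algebra automorphism φ of B (the Nagata automorphism) such that φ(x) = x + 2yw + zw², φ(y) = y + zw, φ(z) = z, and moreover φ is the exponential of D: for every f ∈ B and every m ∈ ℕ with D^m(f) = 0, one has φ(f) = Σ_{n < m} D^n(f)/n!. -/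
open MvPolynomial

/-- The Nagata automorphism of `k[x,y,z]` exists and is the exponential of the locally
nilpotent derivation `D = w • ∂`. -/
theorem nagata_automorphism (k : Type*) [Field k] [CharZero k]
    (d D : Derivation k (MvPolynomial (Fin 3) k) (MvPolynomial (Fin 3) k))
    (hdx : d (X (0 : Fin 3)) = 2 * X (1 : Fin 3))
    (hdy : d (X (1 : Fin 3)) = X (2 : Fin 3))
    (hdz : d (X (2 : Fin 3)) = 0)
    (w : MvPolynomial (Fin 3) k)
    (hw : w = X (1 : Fin 3) ^ 2 - X (0 : Fin 3) * X (2 : Fin 3))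
    (hD : ∀ f : MvPolynomial (Fin 3) k, D f = w * d f)
    (hln : ∀ f : MvPolynomial (Fin 3) k, ∃ m : ℕ, (⇑D)^[m] f = 0) :
    ∃ φ : MvPolynomial (Fin 3) k ≃ₐ[k] MvPolynomial (Fin 3) k,
      φ (X (0 : Fin 3)) = X (0 : Fin 3) + 2 * X (1 : Fin 3) * w + X (2 : Fin 3) * w ^ 2 ∧
      φ (X (1 : Fin 3)) = X (1 : Fin 3) + X (2 : Fin 3) * w ∧
      φ (X (2 : Fin 3)) = X (2 : Fin 3) ∧
      ∀ (f : MvPolynomial (Fin 3) k) (m : ℕ), (⇑D)^[m] f = 0 →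
        φ f = ∑ n ∈ Finset.range m, (n.factorial : k)⁻¹ • (⇑D)^[n] f := by
  classical
  -- the substitution with parameter `c`
  let g : MvPolynomial (Fin 3) k → Fin 3 → MvPolynomial (Fin 3) k := fun c =>
    ![X 0 + 2 * X 1 * (c * w) + X 2 * (c * w) ^ 2, X 1 + X 2 * (c * w), X 2]
  let F : MvPolynomial (Fin 3) k →ₐ[k] MvPolynomial (Fin 3) k := aeval (g 1)
  let G : MvPolynomial (Fin 3) k →ₐ[k] MvPolynomial (Fin 3) k := aeval (g (-1))
  have F0 : F (X 0) = X 0 + 2 * X 1 * w + X 2 * w ^ 2 := by simp [F, g]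
  have F1 : F (X 1) = X 1 + X 2 * w := by simp [F, g]
  have F2 : F (X 2) = X 2 := by simp [F, g]
  have G0 : G (X 0) = X 0 - 2 * X 1 * w + X 2 * w ^ 2 := by simp [G, g]; ring
  have G1 : G (X 1) = X 1 - X 2 * w := by simp [G, g]; ring
  have G2 : G (X 2) = X 2 := by simp [G, g]
  have Fw : F w = w := by
    have h : F w = F (X 1) ^ 2 - F (X 0) * F (X 2) := by rw [hw]; simp only [map_sub, map_mul, map_pow]
    rw [h, F0, F1, F2]; linear_combination -hw
  have Gw : G w = w := by
    have h : G w = G (X 1) ^ 2 - G (X 0) * G (X 2) := by rw [hw]; simp only [map_sub, map_mul, map_pow]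
    rw [h, G0, G1, G2]; linear_combination -hw
  have FG : F.comp G = AlgHom.id k _ := by
    apply MvPolynomial.algHom_ext
    intro i
    fin_cases i
    · change F (G (X 0)) = X 0
      rw [G0]; simp only [map_sub, map_add, map_mul, map_pow, map_ofNat, F0, F1, F2, Fw]; ring
    · change F (G (X 1)) = X 1
      rw [G1]; simp only [map_sub, map_mul, F1, F2, Fw]; ring
    · change F (G (X 2)) = X 2
      rw [G2, F2]
  have GF : G.comp F = AlgHom.id k _ := by
    apply MvPolynomial.algHom_ext
    intro i
    fin_cases i
    · change G (F (X 0)) = X 0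
      rw [F0]; simp only [map_add, map_mul, map_pow, map_ofNat, G0, G1, G2, Gw]; ring
    · change G (F (X 1)) = X 1
      rw [F1]; simp only [map_add, map_mul, G1, G2, Gw]; ring
    · change G (F (X 2)) = X 2
      rw [F2, G2]
  -- the one-parameter version
  let P : MvPolynomial (Fin 3) k →ₐ[k] Polynomial (MvPolynomial (Fin 3) k) :=
    aeval ![Polynomial.C (X 0) + Polynomial.C (2 * X 1 * w) * Polynomial.X
        + Polynomial.C (X 2 * w ^ 2) * Polynomial.X ^ 2,
      Polynomial.C (X 1) + Polynomial.C (X 2 * w) * Polynomial.X, Polynomial.C (X 2)]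
  have P0 : P (X 0) = Polynomial.C (X 0) + Polynomial.C (2 * X 1 * w) * Polynomial.X
        + Polynomial.C (X 2 * w ^ 2) * Polynomial.X ^ 2 := by simp [P]
  have P1 : P (X 1) = Polynomial.C (X 1) + Polynomial.C (X 2 * w) * Polynomial.X := by simp [P]
  have P2 : P (X 2) = Polynomial.C (X 2) := by simp [P]
  have Pw : P w = Polynomial.C w := by
    have h : P w = P (X 1) ^ 2 - P (X 0) * P (X 2) := by rw [hw]; simp only [map_sub, map_mul, map_pow]
    have h2 := congrArg (Polynomial.C) hw
    rw [h, P0, P1, P2]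
    simp only [map_sub, map_mul, map_pow, map_ofNat] at h2 ⊢
    linear_combination -h2
  have hder : ∀ f, Polynomial.derivative (P f) = P (D f) := by
    intro f
    induction f using MvPolynomial.induction_on with
    | C a =>
      have h1 : P (C a) = Polynomial.C (C a) := by
        rw [← MvPolynomial.algebraMap_eq, AlgHom.commutes]; rfl
      have h2 : D (C a) = 0 := by rw [← MvPolynomial.algebraMap_eq, Derivation.map_algebraMap]
      rw [h1, h2, Polynomial.derivative_C, map_zero]
    | add p q hp hq => simp only [map_add, hp, hq]
    | mul_X p i hp =>
      have hX : Polynomial.derivative (P (X i)) = P (D (X i)) := by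
        rw [hD, map_mul, Pw]
        fin_cases i
        · change Polynomial.derivative (P (X 0)) = _ * P (d (X 0))
          rw [hdx, map_mul P, P0, P1]
          simp only [Polynomial.derivative_add, Polynomial.derivative_C,
            Polynomial.derivative_C_mul, Polynomial.derivative_X, Polynomial.derivative_X_pow]
          simp only [map_mul, map_pow, map_ofNat, map_natCast]
          push_cast
          ring
        · change Polynomial.derivative (P (X 1)) = _ * P (d (X 1))
          rw [hdy, P1, P2]
          simp
          ring
        · change Polynomial.derivative (P (X 2)) = _ * P (d (X 2))
          rw [hdz, P2]
          simp
      rw [map_mul, Polynomial.derivative_mul, hp, hX, Derivation.leibniz]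
      simp only [smul_eq_mul, map_add, map_mul]
      ring
  have hzero : ∀ f, (P f).coeff 0 = f := by
    have h : (((Polynomial.aeval (R := MvPolynomial (Fin 3) k) (0 : MvPolynomial (Fin 3) k)).restrictScalars k).comp P)
        = AlgHom.id k _ := by
      apply MvPolynomial.algHom_ext
      intro i
      fin_cases i <;> simp [P]
    intro f
    have := DFunLike.congr_fun h f
    simpa [Polynomial.coeff_zero_eq_eval_zero, Polynomial.aeval_def] using this
  have hone : ∀ f, F f = (P f).eval 1 := by
    have h : F = (((Polynomial.aeval (R := MvPolynomial (Fin 3) k) (1 : MvPolynomial (Fin 3) k)).restrictScalars k).comp P) := by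
      apply MvPolynomial.algHom_ext
      intro i
      fin_cases i <;> simp [P, F, g]
    intro f
    have := DFunLike.congr_fun h f
    simpa [Polynomial.aeval_def] using this
  have hcoeff : ∀ n f, (n.factorial : k) • (P f).coeff n = (⇑D)^[n] f := by
    intro n
    induction n with
    | zero => intro f; simp [hzero]
    | succ n ih =>
      intro f
      rw [Function.iterate_succ_apply, ← ih (D f), ← hder, Polynomial.coeff_derivative,
        Nat.factorial_succ]
      simp only [Algebra.smul_def]
      push_cast
      ring
  have hcoeff' : ∀ n f, (P f).coeff n = (n.factorial : k)⁻¹ • (⇑D)^[n] f := by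
    intro n f
    rw [← hcoeff, inv_smul_smul₀ (Nat.cast_ne_zero.mpr n.factorial_ne_zero)]
  refine ⟨AlgEquiv.ofAlgHom F G FG GF, F0, F1, F2, ?_⟩
  intro f m hm
  change F f = _
  rw [hone, Polynomial.eval_eq_sum_range' (n := max m ((P f).natDegree + 1))
    (lt_of_lt_of_le (Nat.lt_succ_self _) (le_max_right _ _))]
  simp only [one_pow, mul_one, hcoeff']
  symm
  apply Finset.sum_subset
  · intro a ha
    simp only [Finset.mem_range] at ha ⊢
    exact lt_of_lt_of_le ha (le_max_left _ _)
  · intro a _ ha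
    simp only [Finset.mem_range, not_lt] at ha
    obtain ⟨b, rfl⟩ := Nat.exists_eq_add_of_le' ha
    rw [Function.iterate_add_apply, hm, iterate_map_zero, smul_zero]
end

section
/- There exists a k-algebra automorphism ψ of A such that for every f ∈ A and every m ∈ ℕ with D₁^m(f) = 0 one has ψ(f) = Σ_{n < m} D₁^n(f)/n!, and this ψ satisfies, with w₀ = (1/2)·(2·(y ∘ y) − x ∘ z − z ∘ x) and f ∘ g := f·δ(g): ψ(x) = x + 2·(y ∘ w₀) + ((z ∘ w₀) ∘ w₀), ψ(y) = y + (z ∘ w₀), ψ(z) = z. -/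
open MvPolynomial

section ExpAux

variable {k A : Type*} [Field k] [CharZero k] [CommRing A] [Algebra k A]

theorem expAux_leibniz (D : Derivation k A A) (n : ℕ) (f g : A) :
    (⇑D)^[n] (f * g) = ∑ p ∈ Finset.HasAntidiagonal.antidiagonal n,
      n.choose p.1 • ((⇑D)^[p.1] f * (⇑D)^[p.2] g) := by
  induction n with
  | zero => simp
  | succ n ih =>
    rw [Finset.sum_antidiagonal_choose_succ_nsmul (M := A)
      (fun i j => (⇑D)^[i] f * (⇑D)^[j] g) n, Function.iterate_succ_apply', ih, map_sum,
      ← Finset.sum_add_distrib]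
    refine Finset.sum_congr rfl fun p hp => ?_
    rw [map_nsmul, Derivation.leibniz, Nat.choose_symm_of_eq_add
      (by have := Finset.HasAntidiagonal.mem_antidiagonal.1 hp; omega : n = p.2 + p.1)]
    simp only [Function.iterate_succ_apply', smul_eq_mul, nsmul_eq_mul]
    ring

theorem expAux_leibniz' (D : Derivation k A A) (n : ℕ) (f g : A) :
    (n.factorial : k)⁻¹ • (⇑D)^[n] (f * g) = ∑ p ∈ Finset.HasAntidiagonal.antidiagonal n,
      ((p.1.factorial : k)⁻¹ • (⇑D)^[p.1] f) * ((p.2.factorial : k)⁻¹ • (⇑D)^[p.2] g) := by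
  rw [expAux_leibniz, Finset.smul_sum]
  refine Finset.sum_congr rfl fun p hp => ?_
  have h := Finset.HasAntidiagonal.mem_antidiagonal.1 hp
  subst h
  rw [smul_mul_smul_comm, ← Nat.cast_smul_eq_nsmul k, smul_smul]
  congr 1
  have h1 : ((p.1 + p.2).factorial : k) ≠ 0 := by exact_mod_cast Nat.factorial_ne_zero _
  have h2 : (p.1.factorial : k) ≠ 0 := by exact_mod_cast Nat.factorial_ne_zero _
  have h3 : (p.2.factorial : k) ≠ 0 := by exact_mod_cast Nat.factorial_ne_zero _
  have h4 : (((p.1 + p.2).choose p.1 : ℕ) : k) * p.1.factorial * p.2.factorial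
      = (p.1 + p.2).factorial := by
    have := Nat.choose_mul_factorial_mul_factorial (Nat.le_add_right p.1 p.2)
    rw [Nat.add_sub_cancel_left] at this
    exact_mod_cast this
  field_simp
  linear_combination h4

theorem expAux_zero_of_le (D : Derivation k A A) {f : A} {m n : ℕ} (h : (⇑D)^[m] f = 0)
    (hmn : m ≤ n) : (⇑D)^[n] f = 0 := by
  obtain ⟨j, rfl⟩ := Nat.exists_eq_add_of_le' hmn
  rw [Function.iterate_add_apply, h, iterate_map_zero]

theorem expAux_coeff (D : Derivation k A A) {f : A} {m : ℕ} (h : (⇑D)^[m] f = 0) (n : ℕ) :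
    (∑ i ∈ Finset.range m, Polynomial.monomial i ((i.factorial : k)⁻¹ • (⇑D)^[i] f)).coeff n
      = (n.factorial : k)⁻¹ • (⇑D)^[n] f := by
  simp only [Polynomial.finsetSum_coeff, Polynomial.coeff_monomial, Finset.sum_ite_eq',
    Finset.mem_range]
  split_ifs with hn
  · rfl
  · rw [expAux_zero_of_le D h (not_lt.1 hn), smul_zero]

theorem expAux_hom (D : Derivation k A A) (hln : ∀ f : A, ∃ m : ℕ, (⇑D)^[m] f = 0) :
    ∃ ψ : A →ₐ[k] A, ∀ (f : A) (m : ℕ), (⇑D)^[m] f = 0 →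
        ψ f = ∑ n ∈ Finset.range m, (n.factorial : k)⁻¹ • (⇑D)^[n] f := by
  choose M hM using hln
  let Φ : A → Polynomial A := fun f =>
    ∑ i ∈ Finset.range (M f), Polynomial.monomial i ((i.factorial : k)⁻¹ • (⇑D)^[i] f)
  have hΦ : ∀ f n, (Φ f).coeff n = (n.factorial : k)⁻¹ • (⇑D)^[n] f := fun f n =>
    expAux_coeff D (hM f) n
  have hc : ∀ r : k, Φ (algebraMap k A r) = Polynomial.C (algebraMap k A r) := by
    intro r
    ext n
    rw [hΦ, Polynomial.coeff_C]
    cases n with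
    | zero => simp
    | succ n => simp [Function.iterate_succ_apply, iterate_map_zero]
  have h1 : Φ 1 = 1 := by simpa using hc 1
  have h0 : Φ 0 = 0 := by simpa using hc 0
  have hmul : ∀ f g, Φ (f * g) = Φ f * Φ g := by
    intro f g
    ext n
    simp only [Polynomial.coeff_mul, hΦ, expAux_leibniz']
  have hadd : ∀ f g, Φ (f + g) = Φ f + Φ g := by
    intro f g
    ext n
    simp only [Polynomial.coeff_add, hΦ, iterate_map_add, smul_add]
  let ψ : A →ₐ[k] A :=
    { toFun := fun f => (Φ f).eval 1
      map_one' := by simp [h1]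
      map_zero' := by simp [h0]
      map_mul' := fun f g => by simp [hmul]
      map_add' := fun f g => by simp [hadd]
      commutes' := fun r => by simp [hc] }
  refine ⟨ψ, fun f m hm => ?_⟩
  have : Φ f = ∑ i ∈ Finset.range m,
      Polynomial.monomial i ((i.factorial : k)⁻¹ • (⇑D)^[i] f) := by
    ext n
    rw [hΦ, expAux_coeff D hm]
  change (Φ f).eval 1 = _
  rw [this, Polynomial.eval_finsetSum]
  simp

theorem expAux_top (D : Derivation k A A) (ψ : A →ₐ[k] A)
    (hψ : ∀ (f : A) (m : ℕ), (⇑D)^[m] f = 0 →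
        ψ f = ∑ n ∈ Finset.range m, (n.factorial : k)⁻¹ • (⇑D)^[n] f)
    (f : A) (m : ℕ) (h : (⇑D)^[m + 1] f = 0) : (⇑D)^[m] (ψ f) = (⇑D)^[m] f := by
  have hp : ∀ (n : ℕ) (x : A), (⇑D)^[n] x = ((D : A →ₗ[k] A) ^ n) x := fun n x => by
    rw [Module.End.pow_apply]; rfl
  rw [hψ f _ h, Finset.sum_range_succ', hp, map_add, map_sum, Finset.sum_eq_zero]
  · simp [hp]
  · intro i _
    rw [map_smul, ← hp, ← Function.iterate_add_apply, expAux_zero_of_le D h (by omega), smul_zero]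

theorem expAux_equiv (D : Derivation k A A) (hln : ∀ f : A, ∃ m : ℕ, (⇑D)^[m] f = 0) :
    ∃ ψ : A ≃ₐ[k] A, ∀ (f : A) (m : ℕ), (⇑D)^[m] f = 0 →
        ψ f = ∑ n ∈ Finset.range m, (n.factorial : k)⁻¹ • (⇑D)^[n] f := by
  obtain ⟨ψ, hψ⟩ := expAux_hom D hln
  have hinj : Function.Injective ψ := by
    rw [injective_iff_map_eq_zero]
    intro f hf
    obtain ⟨m, hm⟩ := hln f
    induction m with
    | zero => exact hm
    | succ m ih =>
      apply ih
      rw [← expAux_top D ψ hψ f m hm, hf, iterate_map_zero]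
  have hsurj : Function.Surjective ψ := by
    intro f
    obtain ⟨m, hm⟩ := hln f
    induction m generalizing f with
    | zero => exact ⟨0, by rw [map_zero]; exact hm.symm⟩
    | succ m ih =>
      obtain ⟨g, hg⟩ := ih (f - ψ f) (by
        rw [iterate_map_sub, expAux_top D ψ hψ f m hm, sub_self])
      exact ⟨g + f, by rw [map_add, hg, sub_add_cancel]⟩
  exact ⟨AlgEquiv.ofBijective ψ ⟨hinj, hsurj⟩, hψ⟩

end ExpAux

/-- The exponential automorphism `ψ = exp D₁` exists and satisfies
`ψ x = x + 2(y ∘ w₀) + ((z ∘ w₀) ∘ w₀)`, `ψ y = y + z ∘ w₀`, `ψ z = z`,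
where `f ∘ g = f·δ g` and `w₀ = (1/2)(2(y∘y) - x∘z - z∘x)`. -/
theorem exp_D1_automorphism (k : Type*) [Field k] [CharZero k]
    (δ d1 D1 : Derivation k (MvPolynomial (Fin 3 × ℕ) k) (MvPolynomial (Fin 3 × ℕ) k))
    (hδ : ∀ (i : Fin 3) (r : ℕ), δ (X (i, r)) = X (i, r + 1))
    (hd1x : ∀ r : ℕ, d1 (X ((0 : Fin 3), r)) = 2 * X ((1 : Fin 3), r))
    (hd1y : ∀ r : ℕ, d1 (X ((1 : Fin 3), r)) = X ((2 : Fin 3), r))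
    (hd1z : ∀ r : ℕ, d1 (X ((2 : Fin 3), r)) = 0)
    (w : MvPolynomial (Fin 3 × ℕ) k)
    (hw : w = X ((1 : Fin 3), (0 : ℕ)) ^ 2 - X ((0 : Fin 3), (0 : ℕ)) * X ((2 : Fin 3), (0 : ℕ)))
    (hD1 : ∀ f : MvPolynomial (Fin 3 × ℕ) k, D1 f = C ((2 : k)⁻¹) * δ (δ w) * d1 f)
    (hln : ∀ f : MvPolynomial (Fin 3 × ℕ) k, ∃ m : ℕ, (⇑D1)^[m] f = 0)
    (w0 : MvPolynomial (Fin 3 × ℕ) k)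
    (hw0 : w0 = C ((2 : k)⁻¹) *
      (2 * (X ((1 : Fin 3), (0 : ℕ)) * δ (X ((1 : Fin 3), (0 : ℕ)))) -
        X ((0 : Fin 3), (0 : ℕ)) * δ (X ((2 : Fin 3), (0 : ℕ))) -
        X ((2 : Fin 3), (0 : ℕ)) * δ (X ((0 : Fin 3), (0 : ℕ))))) :
    ∃ ψ : MvPolynomial (Fin 3 × ℕ) k ≃ₐ[k] MvPolynomial (Fin 3 × ℕ) k,
      (∀ (f : MvPolynomial (Fin 3 × ℕ) k) (m : ℕ), (⇑D1)^[m] f = 0 →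
        ψ f = ∑ n ∈ Finset.range m, (n.factorial : k)⁻¹ • (⇑D1)^[n] f) ∧
      ψ (X ((0 : Fin 3), (0 : ℕ))) =
        X ((0 : Fin 3), (0 : ℕ)) + 2 * (X ((1 : Fin 3), (0 : ℕ)) * δ w0) +
          (X ((2 : Fin 3), (0 : ℕ)) * δ w0) * δ w0 ∧
      ψ (X ((1 : Fin 3), (0 : ℕ))) = X ((1 : Fin 3), (0 : ℕ)) + X ((2 : Fin 3), (0 : ℕ)) * δ w0 ∧
      ψ (X ((2 : Fin 3), (0 : ℕ))) = X ((2 : Fin 3), (0 : ℕ)) := by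
  have h2 : (C (2 : k)⁻¹ : MvPolynomial (Fin 3 × ℕ) k) * 2 = 1 := by
    rw [show (2 : MvPolynomial (Fin 3 × ℕ) k) = C 2 from (map_ofNat C 2).symm, ← C_mul,
      inv_mul_cancel₀ two_ne_zero, C_1]
  have hC : ∀ (d : Derivation k (MvPolynomial (Fin 3 × ℕ) k) (MvPolynomial (Fin 3 × ℕ) k)),
      d (C (2 : k)⁻¹) = 0 := fun d => by
    rw [← algebraMap_eq]; exact d.map_algebraMap _
  have h2' : ∀ (d : Derivation k (MvPolynomial (Fin 3 × ℕ) k) (MvPolynomial (Fin 3 × ℕ) k)),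
      d 2 = 0 := fun d => by
    simpa using d.map_natCast 2
  have hu : δ w0 = C ((2 : k)⁻¹) * δ (δ w) := by
    subst hw hw0
    simp only [pow_two, Derivation.leibniz, map_sub, map_add, smul_eq_mul, hδ, hC, h2']
    ring
  have hdu : d1 (δ w0) = 0 := by
    subst hw0
    simp only [Derivation.leibniz, map_sub, map_add, smul_eq_mul, hδ, hC, h2', hd1x, hd1y, hd1z,
      map_zero]
    ring
  have hD : ∀ f, D1 f = δ w0 * d1 f := fun f => by rw [hD1, hu]
  obtain ⟨ψ, hψ⟩ := expAux_equiv D1 hln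
  have hz : D1 (X ((2 : Fin 3), (0 : ℕ))) = 0 := by rw [hD, hd1z, mul_zero]
  have hy : D1 (X ((1 : Fin 3), (0 : ℕ))) = δ w0 * X (2, 0) := by rw [hD, hd1y]
  have hx : D1 (X ((0 : Fin 3), (0 : ℕ))) = δ w0 * (2 * X (1, 0)) := by rw [hD, hd1x]
  have hDu : D1 (δ w0) = 0 := by rw [hD, hdu, mul_zero]
  have hyy : D1 (δ w0 * X (2, 0)) = 0 := by simp [Derivation.leibniz, hDu, hz]
  have hxx : D1 (δ w0 * (2 * X (1, 0))) = 2 * (δ w0 * (δ w0 * X (2, 0))) := by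
    simp only [Derivation.leibniz, hDu, hy, h2', smul_eq_mul]
    ring
  have hxxx : D1 (2 * (δ w0 * (δ w0 * X (2, 0)))) = 0 := by
    simp [Derivation.leibniz, hDu, hz, h2']
  refine ⟨ψ, hψ, ?_, ?_, ?_⟩
  · rw [hψ _ 3 (by simp only [Function.iterate_succ_apply, Function.iterate_zero, id, hx, hxx, hxxx])]
    simp only [Finset.sum_range_succ, Finset.sum_range_zero, Function.iterate_succ_apply,
      Function.iterate_zero, id, hx, hxx, Nat.factorial, smul_eq_C_mul]
    norm_num
    try simp only [one_div]
    linear_combination (δ w0 * (δ w0 * X (2, 0))) * h2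
  · rw [hψ _ 2 (by simp only [Function.iterate_succ_apply, Function.iterate_zero, id, hy, hyy])]
    simp [Finset.sum_range_succ, hy]
    ring
  · rw [hψ _ 1 (by simp only [Function.iterate_succ_apply, Function.iterate_zero, id, hz])]
    simp
end
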